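/- Let Π be a connected resolution refutation of a CNF τ (its resolution DAG has a unique sink, labeled by the empty clause) and S a proper subset of var(Π). Applying the variable-deletion algorithm to Π: a node v is deleted if and only if every axiom node below v (in the downward closure of v) is labeled by a clause all of whose variables lie in S. In particular, the root (sink) is never deleted. -/

import Mathlib

abbrev Var := ℕ
abbrev Lit := Var × Bool
abbrev Clause := Finset Lit

def Clause.vars (C : Clause) : Finset Var := C.image Prod.fst

abbrev Assignment := Var → Option Bool

def litSat (σ : Assignment) (l : Lit) : Prop := σ l.1 = some l.2
def litFalse (σ : Assignment) (l : Lit) : Prop := σ l.1 = some (!l.2)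

def Clause.falsified (σ : Assignment) (C : Clause) : Prop := ∀ l ∈ C, litFalse σ l

def resolve (x : Var) (C D : Clause) : Clause :=
  C.filter (fun l => l.1 ≠ x) ∪ D.filter (fun l => l.1 ≠ x)

def resolvableOn (x : Var) (C D : Clause) : Prop :=
  (∃ a : Bool, (x, a) ∈ C ∧ (x, !a) ∈ D) ∧
    ∀ (y : Var) (b : Bool), y ≠ x → (y, b) ∈ C → (y, !b) ∉ D
structure ResDag (V : Type) where
  clause : V → Clause
  prem : V → Option (V × V × Var)
  res_ok : ∀ (v : V) (p : V × V × Var), prem v = some p →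
    (∃ a : Bool, (p.2.2, a) ∈ clause p.1 ∧ (p.2.2, !a) ∈ clause p.2.1) ∧
      clause v = resolve p.2.2 (clause p.1) (clause p.2.1)
  wf : WellFounded (fun u v : V =>
    ∃ p : V × V × Var, prem v = some p ∧ (u = p.1 ∨ u = p.2.1))

def ResDag.parent {V : Type} (G : ResDag V) (u v : V) : Prop :=
  ∃ p : V × V × Var, G.prem v = some p ∧ (u = p.1 ∨ u = p.2.1)

def ResDag.reach {V : Type} (G : ResDag V) : V → V → Prop :=
  Relation.ReflTransGen (ResDag.parent G)

def delS (S : Finset Var) (C : Clause) : Clause := C.filter (fun l => l.1 ∉ S)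
structure DelRun {V : Type} (G : ResDag V) (S : Finset Var) where
  deleted : V → Prop
  c' : V → Clause
  ax_del : ∀ v : V, G.prem v = none → (deleted v ↔ delS S (G.clause v) = ∅)
  ax_keep : ∀ v : V, G.prem v = none → ¬ deleted v → c' v = delS S (G.clause v)
  res_del : ∀ (v : V) (p : V × V × Var), G.prem v = some p →
    deleted p.1 → deleted p.2.1 → deleted v
  res_surv : ∀ (v : V) (p : V × V × Var), G.prem v = some p →
    (¬ deleted p.1 ∨ ¬ deleted p.2.1) → ¬ deleted v
  res_resolve : ∀ (v : V) (p : V × V × Var), G.prem v = some p →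
    ¬ deleted p.1 → ¬ deleted p.2.1 → resolvableOn p.2.2 (c' p.1) (c' p.2.1) →
    c' v = resolve p.2.2 (c' p.1) (c' p.2.1)
  res_weak : ∀ (v : V) (p : V × V × Var), G.prem v = some p →
    (¬ deleted p.1 ∨ ¬ deleted p.2.1) →
    ¬ (¬ deleted p.1 ∧ ¬ deleted p.2.1 ∧ resolvableOn p.2.2 (c' p.1) (c' p.2.1)) →
    ∃ u : V, (u = p.1 ∨ u = p.2.1) ∧ ¬ deleted u ∧
      c' u ⊆ delS S (G.clause v) ∧ c' v = c' u

theorem deleted_iff_aux {V : Type} (G : ResDag V) (S : Finset Var) (R : DelRun G S) (v : V) :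
    R.deleted v ↔
      ∀ u : V, G.prem u = none → ResDag.reach G u v → Clause.vars (G.clause u) ⊆ S := by
  induction v using G.wf.induction with
  | _ v ih =>
  cases hp : G.prem v with
  | none =>
    rw [R.ax_del v hp]
    have key : delS S (G.clause v) = ∅ ↔ Clause.vars (G.clause v) ⊆ S := by
      unfold delS Clause.vars
      rw [Finset.filter_eq_empty_iff, Finset.image_subset_iff]
      simp only [not_not]
    rw [key]
    constructor
    · intro h u _ hr
      rcases Relation.ReflTransGen.cases_tail hr with h1 | ⟨w, _, p, hq, _⟩
      · rw [← h1]; exact h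
      · rw [hp] at hq; cases hq
    · intro h
      exact h v hp Relation.ReflTransGen.refl
  | some p =>
    have ih1 := ih p.1 ⟨p, hp, Or.inl rfl⟩
    have ih2 := ih p.2.1 ⟨p, hp, Or.inr rfl⟩
    constructor
    · intro hd u hu hr
      have h1 : R.deleted p.1 := by
        by_contra h
        exact R.res_surv v p hp (Or.inl h) hd
      have h2 : R.deleted p.2.1 := by
        by_contra h
        exact R.res_surv v p hp (Or.inr h) hd
      rcases Relation.ReflTransGen.cases_tail hr with he | ⟨w, hw, q, hq, hwq⟩
      · rw [← he, hp] at hu; cases hu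
      · rw [hp] at hq
        cases hq
        rcases hwq with rfl | rfl
        · exact ih1.1 h1 u hu hw
        · exact ih2.1 h2 u hu hw
    · intro h
      refine R.res_del v p hp (ih1.2 ?_) (ih2.2 ?_)
      · intro u hu hr
        exact h u hu (Relation.ReflTransGen.tail hr ⟨p, hp, Or.inl rfl⟩)
      · intro u hu hr
        exact h u hu (Relation.ReflTransGen.tail hr ⟨p, hp, Or.inr rfl⟩)

theorem var_from_axiom_aux {V : Type} (G : ResDag V) (y : Var) (v : V)
    (hy : y ∈ Clause.vars (G.clause v)) :
    ∃ u : V, G.prem u = none ∧ ResDag.reach G u v ∧ y ∈ Clause.vars (G.clause u) := by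
  induction v using G.wf.induction with
  | _ v ih =>
  cases hp : G.prem v with
  | none => exact ⟨v, hp, Relation.ReflTransGen.refl, hy⟩
  | some p =>
    have hc := (G.res_ok v p hp).2
    rw [hc] at hy
    have hor : y ∈ Clause.vars (G.clause p.1) ∨ y ∈ Clause.vars (G.clause p.2.1) := by
      unfold Clause.vars resolve at *
      obtain ⟨l, hl, rfl⟩ := Finset.mem_image.1 hy
      rcases Finset.mem_union.1 hl with h | h
      · exact Or.inl (Finset.mem_image_of_mem _ (Finset.mem_filter.1 h).1)
      · exact Or.inr (Finset.mem_image_of_mem _ (Finset.mem_filter.1 h).1)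
    rcases hor with h | h
    · obtain ⟨u, h1, h2, h3⟩ := ih p.1 ⟨p, hp, Or.inl rfl⟩ h
      exact ⟨u, h1, Relation.ReflTransGen.tail h2 ⟨p, hp, Or.inl rfl⟩, h3⟩
    · obtain ⟨u, h1, h2, h3⟩ := ih p.2.1 ⟨p, hp, Or.inr rfl⟩ h
      exact ⟨u, h1, Relation.ReflTransGen.tail h2 ⟨p, hp, Or.inr rfl⟩, h3⟩

theorem stmt_5 {V : Type} [Fintype V] (G : ResDag V) (root : V)
    (hroot : G.clause root = ∅) (hconn : ∀ v : V, ResDag.reach G v root)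
    (S : Finset Var)
    (hSsub : ∀ x ∈ S, ∃ v : V, x ∈ Clause.vars (G.clause v))
    (hproper : ∃ y : Var, (∃ v : V, y ∈ Clause.vars (G.clause v)) ∧ y ∉ S)
    (R : DelRun G S) :
    (∀ v : V, R.deleted v ↔
      ∀ u : V, G.prem u = none → ResDag.reach G u v → Clause.vars (G.clause u) ⊆ S) ∧
    ¬ R.deleted root := by
  refine ⟨deleted_iff_aux G S R, fun hd => ?_⟩
  obtain ⟨y, ⟨v, hv⟩, hyS⟩ := hproper
  obtain ⟨u, hu, _, hyu⟩ := var_from_axiom_aux G y v hv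
  exact hyS ((deleted_iff_aux G S R root).1 hd u hu (hconn u) hyu)
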